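/- For all real numbers a₁, a₂ with −1 < a₁ < a₂ < 1, one has (1/π)·∫_{−1}^{a₁} ((a₁+a₂)/2 − ζ)·√(1−ζ²)/√((a₁−ζ)(a₂−ζ)) dζ + (1/π)·∫_{a₂}^{1} (ζ − (a₁+a₂)/2)·√(1−ζ²)/√((ζ−a₁)(ζ−a₂)) dζ = 1/2 − (a₂−a₁)²/8. -/

import Mathlib

open Real

lemma exists_md (a b : ℝ) (h1 : -1 < a) (h2 : a < b) (h3 : b < 1) :
    ∃ m d : ℝ, -1 < m ∧ m < 1 ∧ 0 < d ∧ d < 1 ∧ a = (m - d) / (1 - m * d) ∧ b = (m + d) / (1 + m * d) := by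
  have ha : 0 < 1 - a ^ 2 := by nlinarith
  have hb : 0 < 1 - b ^ 2 := by nlinarith
  obtain ⟨q, hq0, hq⟩ : ∃ q : ℝ, 0 < q ∧ q ^ 2 = (1 - a ^ 2) * (1 - b ^ 2) :=
    ⟨√((1 - a ^ 2) * (1 - b ^ 2)), by positivity, Real.sq_sqrt (by positivity)⟩
  have hp : 0 < 1 + a * b + q := by nlinarith
  have hn : 0 < 1 - a * b + q := by nlinarith
  have hd0 : 0 < (b - a) / (1 - a * b + q) := div_pos (by linarith) hn
  have hd1 : (b - a) / (1 - a * b + q) < 1 := by rw [div_lt_one hn]; nlinarith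
  have hm0 : -1 < (a + b) / (1 + a * b + q) := by rw [lt_div_iff₀ hp]; nlinarith
  have hm1 : (a + b) / (1 + a * b + q) < 1 := by rw [div_lt_one hp]; nlinarith
  have e1 : 0 < 1 - (a + b) / (1 + a * b + q) * ((b - a) / (1 - a * b + q)) := by nlinarith
  have e2 : 0 < 1 + (a + b) / (1 + a * b + q) * ((b - a) / (1 - a * b + q)) := by nlinarith
  have hp' := hp.ne'
  have hn' := hn.ne'
  have hp2 : 1 + b * a + q ≠ 0 := by rwa [mul_comm b a]
  have hn2 : 1 - b * a + q ≠ 0 := by rwa [mul_comm b a]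
  refine ⟨_, _, hm0, hm1, hd0, hd1, ?_, ?_⟩
  · rw [eq_div_iff e1.ne']
    field_simp
    linear_combination (a) * hq
  · rw [eq_div_iff e2.ne']
    field_simp
    linear_combination (b) * hq

lemma ratio (m d z : ℝ) (hm : -1 < m) (hm' : m < 1) (hd : 0 < d) (hz : d < z) (hz1 : z < 1) :
    √(1 - ((z + m) / (1 + m * z)) ^ 2) / √(((z + m) / (1 + m * z) - (m - d) / (1 - m * d)) * ((z + m) / (1 + m * z) - (m + d) / (1 + m * d)))
    = √((1 - z ^ 2) * (1 - m ^ 2 * d ^ 2) / ((1 - m ^ 2) * (z ^ 2 - d ^ 2))) := by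
  have e1 : 0 < 1 + m * z := by nlinarith
  have e2 : 0 < 1 - m * d := by nlinarith
  have e3 : 0 < 1 + m * d := by nlinarith
  have e4 : 0 < 1 - m ^ 2 := by nlinarith
  have e5 : 0 < z ^ 2 - d ^ 2 := by nlinarith
  have e6 : 0 < 1 - z ^ 2 := by nlinarith
  have n1 := e1.ne'
  have n1' : 1 + z * m ≠ 0 := by rwa [mul_comm z m]
  have n2 := e2.ne'
  have n3 := e3.ne'
  have n2' : 1 - d * m ≠ 0 := by rwa [mul_comm d m]
  have n3' : 1 + d * m ≠ 0 := by rwa [mul_comm d m]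
  have n4 := e4.ne'
  have n5 := e5.ne'
  have f1 : 1 - ((z + m) / (1 + m * z)) ^ 2 = (1 - z ^ 2) * (1 - m ^ 2) / (1 + m * z) ^ 2 := by
    field_simp; ring
  have f2 : ((z + m) / (1 + m * z) - (m - d) / (1 - m * d)) * ((z + m) / (1 + m * z) - (m + d) / (1 + m * d)) = (1 - m ^ 2) ^ 2 * (z ^ 2 - d ^ 2) / ((1 + m * z) ^ 2 * ((1 - m * d) * (1 + m * d))) := by
    field_simp; ring
  rw [f1, f2, ← Real.sqrt_div (by positivity)]
  congr 1
  field_simp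
  ring

lemma stepA (m d : ℝ) (hm : -1 < m) (hm' : m < 1) (hd : 0 < d) (hd1 : d < 1) :
    (∫ ζ in ((m + d) / (1 + m * d))..1, (ζ - ((m - d) / (1 - m * d) + (m + d) / (1 + m * d)) / 2) * √(1 - ζ ^ 2) / √((ζ - (m - d) / (1 - m * d)) * (ζ - (m + d) / (1 + m * d))))
    = ∫ z in d..1, ((1 - m ^ 2) ^ 2 * (z + m * d ^ 2) / ((1 - m ^ 2 * d ^ 2) * (1 + m * z) ^ 3)) * √((1 - z ^ 2) * (1 - m ^ 2 * d ^ 2) / ((1 - m ^ 2) * (z ^ 2 - d ^ 2))) := by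
  have e2 : 0 < 1 - m * d := by nlinarith
  have e3 : 0 < 1 + m * d := by nlinarith
  have e4 : 0 < 1 - m ^ 2 := by nlinarith
  have hb : (m + d) / (1 + m * d) < 1 := by rw [div_lt_one e3]; nlinarith
  have hb' : -1 < (m + d) / (1 + m * d) := by rw [lt_div_iff₀ e3]; nlinarith
  have pos : ∀ z ∈ Set.Ioo d 1, 0 < 1 + m * z := fun z hz => by
    have := hz.1; have := hz.2; nlinarith
  have himg : Set.Ioo ((m + d) / (1 + m * d)) 1 = (fun z => (z + m) / (1 + m * z)) '' Set.Ioo d 1 := by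
    ext x
    constructor
    · rintro ⟨hx, hx1⟩
      have hmx : 0 < 1 - m * x := by nlinarith
      have hmx' := hmx.ne'
      have hmx2 : 1 - x * m ≠ 0 := by rwa [mul_comm x m]
      have e4' := e4.ne'
      have hx' := hx
      rw [div_lt_iff₀ e3] at hx'
      refine ⟨(x - m) / (1 - m * x), ⟨?_, ?_⟩, ?_⟩
      · rw [lt_div_iff₀ hmx]; nlinarith
      · rw [div_lt_one hmx]; nlinarith
      · have : 1 + m * ((x - m) / (1 - m * x)) = (1 - m ^ 2) / (1 - m * x) := by field_simp; ring
        simp only [this]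
        field_simp; ring
    · rintro ⟨z, hz, rfl⟩
      have hp := pos z hz
      obtain ⟨hz0, hz1⟩ := hz
      constructor
      · simp only
        rw [div_lt_div_iff₀ e3 hp]
        nlinarith
      · simp only
        rw [div_lt_one hp]; nlinarith
  rw [intervalIntegral.integral_of_le hb.le, intervalIntegral.integral_of_le hd1.le,
    MeasureTheory.integral_Ioc_eq_integral_Ioo, MeasureTheory.integral_Ioc_eq_integral_Ioo, himg,
    MeasureTheory.integral_image_eq_integral_abs_deriv_smul (f' := fun z => (1 - m ^ 2) / (1 + m * z) ^ 2) measurableSet_Ioo]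
  · refine MeasureTheory.setIntegral_congr_fun measurableSet_Ioo fun z hz => ?_
    have hp := pos z hz
    simp only [smul_eq_mul]
    rw [mul_div_assoc, ratio m d z hm hm' hd hz.1 hz.2, abs_of_pos (by positivity), ← mul_assoc]
    congr 1
    have : 1 - m ^ 2 * d ^ 2 = (1 - m * d) * (1 + m * d) := by ring
    rw [this]
    field_simp
    ring
  · intro z hz
    have hp := pos z hz
    apply HasDerivAt.hasDerivWithinAt
    have := ((hasDerivAt_id z).add_const m).div (((hasDerivAt_id z).const_mul m).const_add 1) hp.ne'
    refine this.congr_deriv ?_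
    simp only [id]; ring
  · intro x hx y hy h
    have hp := pos x hx
    have hq := pos y hy
    simp only at h
    rw [div_eq_div_iff hp.ne' hq.ne'] at h
    have : (1 - m ^ 2) * (x - y) = 0 := by linear_combination h
    rcases mul_eq_zero.1 this with h | h <;> linarith

lemma derivG (A C w : ℝ) (h0 : 0 < w) (h1 : w < 1) :
    HasDerivAt (fun w => √(w * (1 - w)) * (A - C / 4 + C / 2 * w) + (A / 2 + C / 8) * arcsin (2 * w - 1))
      (√((1 - w) / w) * (A + C * w)) w := by
  have hw : 0 < 1 - w := by linarith
  have d1 : HasDerivAt (fun w : ℝ => w * (1 - w)) (1 - 2 * w) w := by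
    refine ((hasDerivAt_id w).mul ((hasDerivAt_id w).const_sub 1)).congr_deriv ?_
    simp only [id]; ring
  have d2 := d1.sqrt (by positivity)
  have d3 : HasDerivAt (fun w : ℝ => A - C / 4 + C / 2 * w) (C / 2) w := by
    refine (((hasDerivAt_id w).const_mul (C / 2)).const_add (A - C / 4)).congr_deriv ?_
    ring
  have d4 : HasDerivAt (fun w : ℝ => 2 * w - 1) 2 w := by
    refine (((hasDerivAt_id w).const_mul 2).sub_const 1).congr_deriv ?_
    ring
  have d5 := (Real.hasDerivAt_arcsin (x := 2 * w - 1) (by linarith) (by linarith)).comp w d4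
  refine ((d2.mul d3).add (d5.const_mul (A / 2 + C / 8))).congr_deriv ?_
  have s1 : √(1 - (2 * w - 1) ^ 2) = 2 * √(w * (1 - w)) := by
    rw [show 1 - (2 * w - 1) ^ 2 = 2 ^ 2 * (w * (1 - w)) by ring, Real.sqrt_mul (by positivity),
      Real.sqrt_sq (by norm_num)]
  have s2 : √((1 - w) / w) = (1 - w) / √(w * (1 - w)) := by
    rw [show (1 - w) / w = (1 - w) ^ 2 / (w * (1 - w)) by field_simp, Real.sqrt_div (by positivity),
      Real.sqrt_sq hw.le]
  have hr : 0 < √(w * (1 - w)) := by positivity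
  have hr2 := Real.sq_sqrt (show 0 ≤ w * (1 - w) by positivity)
  rw [s1, s2]
  generalize √(w * (1 - w)) = r at *
  field_simp
  linear_combination (64 * C) * hr2


lemma stepB (m d : ℝ) (hm : -1 < m) (hm' : m < 1) (hd : 0 < d) (hd1 : d < 1) :
    (∫ z in d..1, ((1 - m ^ 2) ^ 2 * (z + m * d ^ 2) / ((1 - m ^ 2 * d ^ 2) * (1 + m * z) ^ 3)) * √((1 - z ^ 2) * (1 - m ^ 2 * d ^ 2) / ((1 - m ^ 2) * (z ^ 2 - d ^ 2))))
    + (∫ z in d..1, ((1 - m ^ 2) ^ 2 * (z - m * d ^ 2) / ((1 - m ^ 2 * d ^ 2) * (1 - m * z) ^ 3)) * √((1 - z ^ 2) * (1 - m ^ 2 * d ^ 2) / ((1 - m ^ 2) * (z ^ 2 - d ^ 2))))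
    = π / 2 * ((1 - d ^ 2) * (1 - m ^ 4 * d ^ 2) / (1 - m ^ 2 * d ^ 2) ^ 2) := by
  have e4 : 0 < 1 - m ^ 2 := by nlinarith
  have e5 : 0 < 1 - d ^ 2 := by nlinarith
  have e6 : 0 < 1 - m ^ 2 * d ^ 2 := by nlinarith
  have n4 := e4.ne'
  have n5 := e5.ne'
  have n6 := e6.ne'
  have p1 : ∀ z ∈ Set.Icc d 1, 0 < 1 + m * z := fun z hz => by
    have := hz.1; have := hz.2; nlinarith
  have p2 : ∀ z ∈ Set.Icc d 1, 0 < 1 - m * z := fun z hz => by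
    have := hz.1; have := hz.2; nlinarith
  have p3 : ∀ z ∈ Set.Icc d 1, 0 < 1 - m ^ 2 * z ^ 2 := fun z hz => by
    have := mul_pos (p1 z hz) (p2 z hz); nlinarith
  have hT : IntervalIntegrable (fun z => √((1 - z ^ 2) * (1 - m ^ 2 * d ^ 2) / ((1 - m ^ 2) * (z ^ 2 - d ^ 2)))) MeasureTheory.volume d 1 := by
    have h0 : IntervalIntegrable (fun z : ℝ => (z - d) ^ (-(1/2) : ℝ)) MeasureTheory.volume d 1 := by
      have := (intervalIntegral.intervalIntegrable_rpow' (a := 0) (b := 1 - d) (r := -(1/2)) (by norm_num)).comp_sub_right d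
      simpa using this
    have hc : ContinuousOn (fun z : ℝ => √((1 - z ^ 2) * (1 - m ^ 2 * d ^ 2) / ((1 - m ^ 2) * (z + d)))) (Set.uIcc d 1) := by
      rw [Set.uIcc_of_le hd1.le]
      refine ContinuousOn.sqrt (ContinuousOn.div (by fun_prop) (by fun_prop) ?_)
      intro z hz
      have : 0 < z + d := by linarith [hz.1]
      positivity
    refine (h0.continuousOn_mul hc).congr ?_
    rw [Set.uIoc_of_le hd1.le]
    intro z hz
    have hz1 := hz.1
    have hz2 := hz.2
    have q1 : 0 < z - d := by linarith
    have q2 : 0 < z + d := by linarith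
    have q3 : 0 ≤ 1 - z ^ 2 := by nlinarith
    simp only
    rw [Real.rpow_neg q1.le, ← Real.sqrt_eq_rpow, ← div_eq_mul_inv, ← Real.sqrt_div (by positivity)]
    congr 1
    rw [div_div]
    congr 1
    ring
  have c1 : ContinuousOn (fun z : ℝ => (1 - m ^ 2) ^ 2 * (z + m * d ^ 2) / ((1 - m ^ 2 * d ^ 2) * (1 + m * z) ^ 3)) (Set.uIcc d 1) := by
    rw [Set.uIcc_of_le hd1.le]
    refine ContinuousOn.div (by fun_prop) (by fun_prop) ?_
    intro z hz
    have := p1 z hz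
    positivity
  have c2 : ContinuousOn (fun z : ℝ => (1 - m ^ 2) ^ 2 * (z - m * d ^ 2) / ((1 - m ^ 2 * d ^ 2) * (1 - m * z) ^ 3)) (Set.uIcc d 1) := by
    rw [Set.uIcc_of_le hd1.le]
    refine ContinuousOn.div (by fun_prop) (by fun_prop) ?_
    intro z hz
    have := p2 z hz
    positivity
  have i1 := hT.continuousOn_mul c1
  have i2 := hT.continuousOn_mul c2
  rw [← intervalIntegral.integral_add i1 i2]
  obtain ⟨A, hA⟩ : ∃ A, A = 1 + m ^ 2 * d ^ 2 := ⟨_, rfl⟩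
  obtain ⟨C, hC⟩ : ∃ C, C = (1 + 3 * m ^ 2 - 3 * m ^ 2 * d ^ 2 - m ^ 4 * d ^ 2) / (1 - m ^ 2) - A := ⟨_, rfl⟩
  obtain ⟨c, hc⟩ : ∃ c, c = (1 - m ^ 2) * (1 - d ^ 2) / (1 - m ^ 2 * d ^ 2) ^ 2 := ⟨_, rfl⟩
  let W : ℝ → ℝ := fun z => (z ^ 2 - d ^ 2) * (1 - m ^ 2) / ((1 - m ^ 2 * z ^ 2) * (1 - d ^ 2))
  have hWc : ContinuousOn W (Set.Icc d 1) := by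
    refine ContinuousOn.div (by fun_prop) (by fun_prop) ?_
    intro z hz
    have := p3 z hz
    positivity
  have hWd : W d = 0 := by simp [W]
  have hW1 : W 1 = 1 := by
    simp only [W]; field_simp
  rw [intervalIntegral.integral_eq_sub_of_hasDerivAt_of_le (f := fun z => c * (√(W z * (1 - W z)) * (A - C / 4 + C / 2 * W z) + (A / 2 + C / 8) * arcsin (2 * W z - 1))) hd1.le _ _ (i1.add i2)]
  · simp only [hWd, hW1]
    norm_num
    rw [hc, hC, hA]
    field_simp
    ring
  · have := Real.continuous_arcsin.comp_continuousOn (f := fun z => 2 * W z - 1) (by fun_prop)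
    simp only [Function.comp_def] at this
    fun_prop
  · intro z hz
    have hz' := Set.Ioo_subset_Icc_self hz
    have q1 := p1 z hz'
    have q2 := p2 z hz'
    have q3 := p3 z hz'
    have hz1 := hz.1
    have hz2 := hz.2
    have n1 := q1.ne'
    have n2 := q2.ne'
    have n3 := q3.ne'
    have n3' : 1 - z ^ 2 * m ^ 2 ≠ 0 := by rwa [mul_comm (z ^ 2) (m ^ 2)]
    have n1' : 1 + z * m ≠ 0 := by rwa [mul_comm z m]
    have n2' : 1 - z * m ≠ 0 := by rwa [mul_comm z m]
    have n6' : 1 - d ^ 2 * m ^ 2 ≠ 0 := by rwa [mul_comm (d ^ 2) (m ^ 2)]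
    have q4 : 0 < z ^ 2 - d ^ 2 := by nlinarith
    have q5 : 0 < 1 - z ^ 2 := by nlinarith
    have n7 := q4.ne'
    have w0 : 0 < W z := by simp only [W]; positivity
    have w1' : 1 - W z = (1 - z ^ 2) * (1 - m ^ 2 * d ^ 2) / ((1 - m ^ 2 * z ^ 2) * (1 - d ^ 2)) := by
      simp only [W]; field_simp; ring
    have w1 : 0 < 1 - W z := by rw [w1']; positivity
    have hr : (1 - W z) / W z = (1 - z ^ 2) * (1 - m ^ 2 * d ^ 2) / ((1 - m ^ 2) * (z ^ 2 - d ^ 2)) := by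
      rw [w1']; simp only [W]; field_simp
    have dW : HasDerivAt W (2 * z * (1 - m ^ 2) * (1 - m ^ 2 * d ^ 2) / ((1 - d ^ 2) * (1 - m ^ 2 * z ^ 2) ^ 2)) z := by
      have s := (hasDerivAt_pow 2 z)
      have := ((s.sub_const (d ^ 2)).mul_const (1 - m ^ 2)).div (((s.const_mul (m ^ 2)).const_sub 1).mul_const (1 - d ^ 2)) (by positivity)
      refine this.congr_deriv ?_
      field_simp
      push_cast
      ring
    have := ((derivG A C (W z) w0 (by linarith)).comp z dW).const_mul c
    refine this.congr_deriv ?_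
    rw [hr]
    have key : (1 - m ^ 2) ^ 2 * (z + m * d ^ 2) / ((1 - m ^ 2 * d ^ 2) * (1 + m * z) ^ 3) + (1 - m ^ 2) ^ 2 * (z - m * d ^ 2) / ((1 - m ^ 2 * d ^ 2) * (1 - m * z) ^ 3) = c * ((A + C * W z) * (2 * z * (1 - m ^ 2) * (1 - m ^ 2 * d ^ 2) / ((1 - d ^ 2) * (1 - m ^ 2 * z ^ 2) ^ 2))) := by
      have l : A + C * W z = (1 - 3 * m ^ 2 * d ^ 2 + (3 * m ^ 2 - m ^ 4 * d ^ 2) * z ^ 2) / (1 - m ^ 2 * z ^ 2) := by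
        rw [hC, hA]; simp only [W]; field_simp; ring
      rw [l, hc, show 1 - m ^ 2 * z ^ 2 = (1 + m * z) * (1 - m * z) by ring]
      field_simp
      ring
    rw [← add_mul, key]
    ring

theorem genus_zero_average_density (a₁ a₂ : ℝ)
    (h1 : -1 < a₁) (h2 : a₁ < a₂) (h3 : a₂ < 1) :
    (1 / π) * (∫ ζ in (-1 : ℝ)..a₁,
        ((a₁ + a₂) / 2 - ζ) * Real.sqrt (1 - ζ ^ 2) / Real.sqrt ((a₁ - ζ) * (a₂ - ζ)))
      + (1 / π) * (∫ ζ in a₂..(1 : ℝ),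
        (ζ - (a₁ + a₂) / 2) * Real.sqrt (1 - ζ ^ 2) / Real.sqrt ((ζ - a₁) * (ζ - a₂)))
      = 1 / 2 - (a₂ - a₁) ^ 2 / 8 := by
  obtain ⟨m, d, hm, hm', hd, hd1, ha, hb⟩ := exists_md a₁ a₂ h1 h2 h3
  have e2 : 0 < 1 - m * d := by nlinarith
  have e3 : 0 < 1 + m * d := by nlinarith
  have n2 := e2.ne'
  have n3 := e3.ne'
  have n2' : 1 - d * m ≠ 0 := by rwa [mul_comm d m]
  have n3' : 1 + d * m ≠ 0 := by rwa [mul_comm d m]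
  have R := stepA m d hm hm' hd hd1
  have L := stepA (-m) d (by linarith) (by linarith) hd hd1
  have B := stepB m d hm hm' hd hd1
  have ha' : (-m + d) / (1 + -m * d) = -a₁ := by
    rw [ha, ← neg_div]; congr 1 <;> ring
  have hb' : (-m - d) / (1 - -m * d) = -a₂ := by
    rw [hb, ← neg_div]; congr 1 <;> ring
  rw [← ha, ← hb] at R
  rw [ha', hb'] at L
  have L2 : (∫ ζ in (-1 : ℝ)..a₁,
        ((a₁ + a₂) / 2 - ζ) * Real.sqrt (1 - ζ ^ 2) / Real.sqrt ((a₁ - ζ) * (a₂ - ζ))) =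
      ∫ ζ in (-a₁)..1, (ζ - (-a₂ + -a₁) / 2) * √(1 - ζ ^ 2) / √((ζ - -a₂) * (ζ - -a₁)) := by
    have := intervalIntegral.integral_comp_neg (a := -a₁) (b := 1) (fun ζ : ℝ => ((a₁ + a₂) / 2 - ζ) * Real.sqrt (1 - ζ ^ 2) / Real.sqrt ((a₁ - ζ) * (a₂ - ζ)))
    rw [neg_neg] at this
    rw [← this]
    congr 1
    ext ζ
    congr 2 <;> ring_nf
  rw [L2, L, R, ← mul_add]
  have B' := B
  rw [add_comm] at B'
  simp only [neg_sq, neg_mul, ← sub_eq_add_neg] at *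
  rw [B', ha, hb]
  have : 1 - m ^ 2 * d ^ 2 = (1 - m * d) * (1 + m * d) := by ring
  rw [this]
  have := Real.pi_pos.ne'
  field_simp
  ring
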